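/- Let A be an integrally closed residuated lattice and write ~a := a\e (= e/a). Then the map α(a) = ~~a preserves binary meets: ~~(a ∧ b) = ~~a ∧ ~~b for all a, b ∈ A. -/

import Mathlib

/-- A residuated lattice: a lattice-ordered monoid with left and right residuals,
i.e. `b ≤ a\c ↔ a*b ≤ c ↔ a ≤ c/b`.  `ldiv a c` denotes `a\c` and `rdiv c b` denotes `c/b`. -/
class ResiduatedLattice (α : Type*) extends Lattice α, Monoid α where
  ldiv : α → α → α
  rdiv : α → α → α
  le_ldiv_iff : ∀ a b c : α, b ≤ ldiv a c ↔ a * b ≤ c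
  le_rdiv_iff : ∀ a b c : α, a ≤ rdiv c b ↔ a * b ≤ c

open ResiduatedLattice

/-!
Integral closedness allows a left factor `a * ~a` to be cancelled: if `a * ~a * x ≤ 1` then
`~a * x ≤ ~a`, so `x ≤ 1`. If `c ≤ ~~a` and `c ≤ ~~b`, then `(a * ~a) * (b * ~b) * c` lies below
both `a` and `b`, so its product with `~(a ⊓ b)` lies below `1`. Cancelling twice leaves
`c * ~(a ⊓ b) ≤ 1`. Here the factors may be swapped, because `a * b ≤ 1` gives `a * (b * a) ≤ a`
and hence `b * a ≤ 1`; thus `c ≤ ~~(a ⊓ b)`.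
-/

section Preorder

variable {α : Type*} [Monoid α] [Preorder α]

/-- `neg` is the negation `~a = a\e` of an ordered monoid, characterised without
assuming that any other residual exists. -/
def IsNegation (neg : α → α) : Prop :=
  ∀ a b : α, b ≤ neg a ↔ a * b ≤ 1

theorem mul_le_one_symm_of_integrallyClosed [MulRightMono α]
    (hic : ∀ a x : α, a * x ≤ a → x ≤ 1) {a b : α} (hab : a * b ≤ 1) : b * a ≤ 1 := by
  apply hic a
  calc a * (b * a) = a * b * a := (mul_assoc a b a).symm
    _ ≤ a := mul_le_of_le_one_left' hab

namespace IsNegation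

variable {neg : α → α} {a c x : α}

theorem mul_neg_le_one (hneg : IsNegation neg) (a : α) : a * neg a ≤ 1 :=
  (hneg a (neg a)).1 le_rfl

theorem antitone [MulRightMono α] (hneg : IsNegation neg) : Antitone neg := fun a b hab =>
  (hneg a (neg b)).2 <|
    calc a * neg b ≤ b * neg b := by gcongr
      _ ≤ 1 := hneg.mul_neg_le_one b

theorem le_one_of_mul_neg_mul_le_one (hneg : IsNegation neg)
    (hic : ∀ a x : α, a * x ≤ a → x ≤ 1) (h : a * neg a * x ≤ 1) : x ≤ 1 :=
  hic (neg a) x <| (hneg a (neg a * x)).2 <| by rwa [← mul_assoc]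

theorem mul_neg_mul_le_self [MulLeftMono α] (hneg : IsNegation neg)
    (hc : c ≤ neg (neg a)) : a * neg a * c ≤ a :=
  calc a * neg a * c = a * (neg a * c) := mul_assoc a (neg a) c
    _ ≤ a := mul_le_of_le_one_right' ((hneg (neg a) c).1 hc)

end IsNegation

end Preorder

section SemilatticeInf

variable {α : Type*} [Monoid α] [SemilatticeInf α] [MulLeftMono α] [MulRightMono α]
  {neg : α → α}

theorem IsNegation.mul_neg_mul_mul_neg_mul_le_inf (hneg : IsNegation neg) {a b c : α}
    (ha : c ≤ neg (neg a)) (hb : c ≤ neg (neg b)) :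
    a * neg a * (b * neg b * c) ≤ a ⊓ b := by
  apply le_inf
  · calc a * neg a * (b * neg b * c) ≤ a * neg a * c := by
          gcongr
          exact mul_le_of_le_one_left' (hneg.mul_neg_le_one b)
      _ ≤ a := hneg.mul_neg_mul_le_self ha
  · calc a * neg a * (b * neg b * c) ≤ b * neg b * c :=
          mul_le_of_le_one_left' (hneg.mul_neg_le_one a)
      _ ≤ b := hneg.mul_neg_mul_le_self hb

theorem IsNegation.le_neg_neg_inf (hneg : IsNegation neg)
    (hic : ∀ a x : α, a * x ≤ a → x ≤ 1) {a b c : α}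
    (ha : c ≤ neg (neg a)) (hb : c ≤ neg (neg b)) : c ≤ neg (neg (a ⊓ b)) := by
  have uncancelled : a * neg a * (b * neg b * (c * neg (a ⊓ b))) ≤ 1 :=
    calc a * neg a * (b * neg b * (c * neg (a ⊓ b)))
        = a * neg a * (b * neg b * c) * neg (a ⊓ b) := by simp only [mul_assoc]
      _ ≤ (a ⊓ b) * neg (a ⊓ b) := by
          gcongr
          exact hneg.mul_neg_mul_mul_neg_mul_le_inf ha hb
      _ ≤ 1 := hneg.mul_neg_le_one (a ⊓ b)
  have cancelled : c * neg (a ⊓ b) ≤ 1 :=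
    hneg.le_one_of_mul_neg_mul_le_one hic (hneg.le_one_of_mul_neg_mul_le_one hic uncancelled)
  exact (hneg _ c).2 (mul_le_one_symm_of_integrallyClosed hic cancelled)

theorem notnot_inf_general (hneg : IsNegation neg) (hic : ∀ a x : α, a * x ≤ a → x ≤ 1)
    (a b : α) : neg (neg (a ⊓ b)) = neg (neg a) ⊓ neg (neg b) :=
  le_antisymm ((hneg.antitone.comp hneg.antitone).map_inf_le a b)
    (hneg.le_neg_neg_inf hic inf_le_left inf_le_right)

end SemilatticeInf

namespace ResiduatedLattice

variable {α : Type*} [ResiduatedLattice α]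

theorem gc_mul_ldiv (a : α) : GaloisConnection (a * ·) (ldiv a) := fun b c =>
  (le_ldiv_iff a b c).symm

theorem gc_mul_rdiv (b : α) : GaloisConnection (· * b) (rdiv · b) := fun a c =>
  (le_rdiv_iff a b c).symm

instance : MulLeftMono α :=
  ⟨fun a _ _ h => (gc_mul_ldiv a).monotone_l h⟩

instance : MulRightMono α :=
  ⟨fun b _ _ h => (gc_mul_rdiv b).monotone_l h⟩

theorem isNegation_ldiv_one : IsNegation fun a : α => ldiv a 1 := fun a b =>
  le_ldiv_iff a b 1

theorem le_one_of_mul_le_self {a x : α} (ha : ldiv a a = 1) (h : a * x ≤ a) : x ≤ 1 :=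
  ((le_ldiv_iff a x a).2 h).trans_eq ha

end ResiduatedLattice

/-- In any integrally closed residuated lattice, the nucleus `α(a) = ~~a`
preserves binary meets, where `~a := a\e = e/a`. -/
theorem notnot_inf {α : Type*} [ResiduatedLattice α]
    (hic : ∀ a : α, ldiv a a = 1 ∧ rdiv a a = 1) :
    ∀ a b : α, ldiv (ldiv (a ⊓ b) 1) 1 = ldiv (ldiv a 1) 1 ⊓ ldiv (ldiv b 1) 1 :=
  notnot_inf_general isNegation_ldiv_one fun a _ => le_one_of_mul_le_self (hic a).1
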